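/- arXiv:1903.12359 — 3 statements merged into one kernel-verified Lean document; each statement's English description precedes it below -/
import Mathlib

section
/- Let R = [a,b] × [c,d] ⊆ ℝ² be a closed rectangle and let φ, ψ : R → ℝ² be continuously differentiable maps that agree on the boundary ∂R of the rectangle. Then the integrals of their Jacobian determinants over R coincide: ∫_R det Dφ = ∫_R det Dψ. (That is, the signed area A(φ) = ∫_R det Dφ depends only on the boundary values of φ.) -/
/-!
For `C²` maps the Jacobian is a divergence and the claim is Stokes' theorem; for `C¹` maps the
divergence form is not available, so one integrates over slices instead.

With `φ = (φ₁, φ₂)`, `ψ = (ψ₁, ψ₂)` and `{f, g} = f_x g_y - f_y g_x`, bilinearity gives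
`det Dφ - det Dψ = {φ₁ - ψ₁, φ₂} - {φ₂ - ψ₂, ψ₁}`, so it suffices that `∫_R {w, g} = 0` for `C¹`
functions `w, g` with `w = 0` on `∂R` (`integral_bracket_eq_zero`). Put
`A(x) = ∫_c^d w(x,y) g_y(x,y) dy`. Although `g_y` need not be differentiable in `x`, integration by
parts in `y` turns the increment of `A` into
`A(z) - A(x) = ∫_c^d (w(z,y) - w(x,y)) g_y(z,y) dy - ∫_c^d w_y(x,y) (g(z,y) - g(x,y)) dy`,
whence `A'(x) = ∫_c^d {w, g}(x,y) dy` by dominated convergence (`hasDerivAt_slice`).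
As `A(a) = A(b) = 0`, the fundamental theorem of calculus and Fubini's theorem finish the proof.
-/

open MeasureTheory
open Set Filter Topology

lemma det_prod_eq (L : (ℝ × ℝ) →ₗ[ℝ] (ℝ × ℝ)) :
    LinearMap.det L = (L (1, 0)).1 * (L (0, 1)).2 - (L (0, 1)).1 * (L (1, 0)).2 := by
  rw [← LinearMap.det_toMatrix (Module.Basis.finTwoProd ℝ), Matrix.det_fin_two]
  simp [LinearMap.toMatrix_apply]

section Slices

variable {a b c d : ℝ} {f : ℝ × ℝ → ℝ} {f' : ℝ × ℝ → (ℝ × ℝ →L[ℝ] ℝ)}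

lemma hasDerivWithinAt_fst
    (hf : ∀ p ∈ Icc a b ×ˢ Icc c d, HasFDerivWithinAt f (f' p) (Icc a b ×ˢ Icc c d) p)
    {x y : ℝ} (hx : x ∈ Icc a b) (hy : y ∈ Icc c d) :
    HasDerivWithinAt (fun t => f (t, y)) (f' (x, y) (1, 0)) (Icc a b) x :=
  HasFDerivWithinAt.comp_hasDerivWithinAt (f := fun t : ℝ => (t, y)) x (hf (x, y) ⟨hx, hy⟩)
    ((hasDerivWithinAt_id x _).prodMk (hasDerivWithinAt_const x _ y)) (fun _ ht => ⟨ht, hy⟩)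

lemma hasDerivWithinAt_snd
    (hf : ∀ p ∈ Icc a b ×ˢ Icc c d, HasFDerivWithinAt f (f' p) (Icc a b ×ˢ Icc c d) p)
    {x y : ℝ} (hx : x ∈ Icc a b) (hy : y ∈ Icc c d) :
    HasDerivWithinAt (fun t => f (x, t)) (f' (x, y) (0, 1)) (Icc c d) y :=
  HasFDerivWithinAt.comp_hasDerivWithinAt (f := fun t : ℝ => (x, t)) y (hf (x, y) ⟨hx, hy⟩)
    ((hasDerivWithinAt_const y _ x).prodMk (hasDerivWithinAt_id y _)) (fun _ ht => ⟨hx, ht⟩)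

lemma continuousOn_slice {k : ℝ × ℝ → ℝ} (hk : ContinuousOn k (Icc a b ×ˢ Icc c d))
    {x : ℝ} (hx : x ∈ Icc a b) : ContinuousOn (fun y => k (x, y)) (Icc c d) :=
  hk.comp (by fun_prop) (fun _ hy => ⟨hx, hy⟩)

lemma intervalIntegrable_slice (hcd : c ≤ d) {k : ℝ × ℝ → ℝ}
    (hk : ContinuousOn k (Icc a b ×ˢ Icc c d))
    {x : ℝ} (hx : x ∈ Icc a b) : IntervalIntegrable (fun y => k (x, y)) volume c d :=
  (continuousOn_slice hk hx).intervalIntegrable_of_Icc hcd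

lemma aestronglyMeasurable_slice (hcd : c ≤ d) {k : ℝ → ℝ} (hk : ContinuousOn k (Icc c d)) :
    AEStronglyMeasurable k (volume.restrict (uIoc c d)) := by
  rw [uIoc_of_le hcd]
  exact (hk.mono Ioc_subset_Icc_self).aestronglyMeasurable measurableSet_Ioc

lemma exists_bound {k : ℝ × ℝ → ℝ} (hk : ContinuousOn k (Icc a b ×ˢ Icc c d)) :
    ∃ C, ∀ x ∈ Icc a b, ∀ y ∈ Icc c d, |k (x, y)| ≤ C := by
  obtain ⟨C, hC⟩ := (isCompact_Icc.prod isCompact_Icc).exists_bound_of_continuousOn hk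
  exact ⟨C, fun x hx y hy => hC (x, y) ⟨hx, hy⟩⟩

lemma continuousOn_integral_slice (hcd : c ≤ d) {k : ℝ × ℝ → ℝ}
    (hk : ContinuousOn k (Icc a b ×ˢ Icc c d)) :
    ContinuousOn (fun x => ∫ y in c..d, k (x, y)) (Icc a b) := by
  obtain ⟨C, hC⟩ := exists_bound hk
  intro x hx
  refine intervalIntegral.continuousWithinAt_of_dominated_interval (bound := fun _ => C) ?_ ?_
    intervalIntegrable_const ?_
  · filter_upwards [self_mem_nhdsWithin] with z hz
    exact aestronglyMeasurable_slice hcd (continuousOn_slice hk hz)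
  · filter_upwards [self_mem_nhdsWithin] with z hz
    refine Eventually.of_forall fun y hy => ?_
    rw [uIoc_of_le hcd] at hy
    exact hC z hz y (Ioc_subset_Icc_self hy)
  · refine Eventually.of_forall fun y hy => ?_
    rw [uIoc_of_le hcd] at hy
    exact (hk.comp (f := fun t : ℝ => (t, y)) (by fun_prop)
      (fun t ht => ⟨ht, Ioc_subset_Icc_self hy⟩)) x hx

/-- Difference quotients in the first variable against a continuous weight may be passed to the
limit under the integral sign. -/
lemma tendsto_integral_slope (hcd : c ≤ d)
    (hf : ∀ p ∈ Icc a b ×ˢ Icc c d, HasFDerivWithinAt f (f' p) (Icc a b ×ˢ Icc c d) p)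
    (hf' : ContinuousOn f' (Icc a b ×ˢ Icc c d))
    {k : ℝ × ℝ → ℝ} (hk : ContinuousOn k (Icc a b ×ˢ Icc c d))
    {s : ℝ → ℝ} (hs : ContinuousOn s (Icc a b)) (hsm : MapsTo s (Icc a b) (Icc a b))
    {x : ℝ} (hx : x ∈ Ioo a b) :
    Tendsto (fun z => ∫ y in c..d, (z - x)⁻¹ * (f (z, y) - f (x, y)) * k (s z, y)) (𝓝[≠] x)
      (𝓝 (∫ y in c..d, f' (x, y) (1, 0) * k (s x, y))) := by
  have hxI : x ∈ Icc a b := Ioo_subset_Icc_self hx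
  have hfc : ContinuousOn f (Icc a b ×ˢ Icc c d) := fun p hp => (hf p hp).continuousWithinAt
  obtain ⟨C, hC⟩ := exists_bound (k := fun p => f' p (1, 0)) (by fun_prop)
  obtain ⟨K, hK⟩ := exists_bound hk
  have hmem : ∀ᶠ z in 𝓝[≠] x, z ∈ Icc a b := nhdsWithin_le_nhds (Icc_mem_nhds hx.1 hx.2)
  refine intervalIntegral.tendsto_integral_filter_of_dominated_convergence (fun _ => C * K) ?_ ?_
    intervalIntegrable_const ?_
  · filter_upwards [hmem] with z hz
    refine aestronglyMeasurable_slice hcd ?_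
    exact (continuousOn_const.mul ((continuousOn_slice hfc hz).sub
      (continuousOn_slice hfc hxI))).mul (continuousOn_slice hk (hsm hz))
  · filter_upwards [hmem, self_mem_nhdsWithin] with z hz hzx
    refine Eventually.of_forall fun y hy => ?_
    rw [uIoc_of_le hcd] at hy
    have hyI := Ioc_subset_Icc_self hy
    have h1 := (convex_Icc a b).norm_image_sub_le_of_norm_hasDerivWithin_le
      (f := fun t => f (t, y)) (fun t ht => hasDerivWithinAt_fst hf ht hyI)
      (fun t ht => hC t ht y hyI) hxI hz
    have hpos : 0 < |z - x| := abs_pos.2 (sub_ne_zero.2 hzx)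
    have h2 : |(z - x)⁻¹ * (f (z, y) - f (x, y))| ≤ C := by
      rw [abs_mul, abs_inv, inv_mul_le_iff₀ hpos, mul_comm]
      exact h1
    rw [norm_mul]
    exact mul_le_mul h2 (hK _ (hsm hz) y hyI) (norm_nonneg _) ((abs_nonneg _).trans h2)
  · refine Eventually.of_forall fun y hy => ?_
    rw [uIoc_of_le hcd] at hy
    have hyI := Ioc_subset_Icc_self hy
    refine Tendsto.mul ?_ ?_
    · have := (hasDerivWithinAt_fst hf hxI hyI).hasDerivAt (Icc_mem_nhds hx.1 hx.2)
      rw [hasDerivAt_iff_tendsto_slope] at this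
      exact this
    · have h1 : ContinuousOn (fun t => k (s t, y)) (Icc a b) :=
        hk.comp (f := fun t : ℝ => (s t, y)) (by fun_prop) (fun t ht => ⟨hsm ht, hyI⟩)
      exact (h1.continuousAt (Icc_mem_nhds hx.1 hx.2)).tendsto.mono_left nhdsWithin_le_nhds

end Slices

section Bracket

variable {a b c d : ℝ} {w g : ℝ × ℝ → ℝ} {w' g' : ℝ × ℝ → (ℝ × ℝ →L[ℝ] ℝ)}

/-- The slice integral `∫ w g_y dy` is differentiable in `x` although `g_y` need not be: the
`x`-increment of `g_y` is integrated by parts in `y`, the boundary terms vanishing with `w`. -/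
lemma hasDerivAt_slice (hcd : c ≤ d)
    (hw : ∀ p ∈ Icc a b ×ˢ Icc c d, HasFDerivWithinAt w (w' p) (Icc a b ×ˢ Icc c d) p)
    (hg : ∀ p ∈ Icc a b ×ˢ Icc c d, HasFDerivWithinAt g (g' p) (Icc a b ×ˢ Icc c d) p)
    (hw' : ContinuousOn w' (Icc a b ×ˢ Icc c d)) (hg' : ContinuousOn g' (Icc a b ×ˢ Icc c d))
    (hwc : ∀ x ∈ Icc a b, w (x, c) = 0) (hwd : ∀ x ∈ Icc a b, w (x, d) = 0)
    {x : ℝ} (hx : x ∈ Ioo a b) :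
    HasDerivAt (fun x => ∫ y in c..d, w (x, y) * g' (x, y) (0, 1))
      (∫ y in c..d, (w' (x, y) (1, 0) * g' (x, y) (0, 1) - w' (x, y) (0, 1) * g' (x, y) (1, 0)))
      x := by
  have hxI : x ∈ Icc a b := Ioo_subset_Icc_self hx
  have hwcont : ContinuousOn w (Icc a b ×ˢ Icc c d) := fun p hp => (hw p hp).continuousWithinAt
  have hgcont : ContinuousOn g (Icc a b ×ˢ Icc c d) := fun p hp => (hg p hp).continuousWithinAt
  have hwx : ContinuousOn (fun p => w' p (1, 0)) (Icc a b ×ˢ Icc c d) := by fun_prop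
  have hwy : ContinuousOn (fun p => w' p (0, 1)) (Icc a b ×ˢ Icc c d) := by fun_prop
  have hgx : ContinuousOn (fun p => g' p (1, 0)) (Icc a b ×ˢ Icc c d) := by fun_prop
  have hgy : ContinuousOn (fun p => g' p (0, 1)) (Icc a b ×ˢ Icc c d) := by fun_prop
  have T1 := tendsto_integral_slope hcd hw hw' hgy (s := fun z => z) continuousOn_id
    (fun _ h => h) hx
  have T2 := tendsto_integral_slope hcd hg hg' hwy (s := fun _ => x) continuousOn_const
    (fun _ _ => hxI) hx
  rw [hasDerivAt_iff_tendsto_slope]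
  have hlim := T1.sub T2
  rw [← intervalIntegral.integral_sub
    (intervalIntegrable_slice hcd (k := fun p => w' p (1, 0) * g' p (0, 1)) (hwx.mul hgy) hxI)
    (intervalIntegrable_slice hcd (k := fun p => g' p (1, 0) * w' p (0, 1)) (hgx.mul hwy) hxI)] at hlim
  have hmem : ∀ᶠ z in 𝓝[≠] x, z ∈ Icc a b := nhdsWithin_le_nhds (Icc_mem_nhds hx.1 hx.2)
  have hlim' := hlim.congr' (f₂ := slope (fun x => ∫ y in c..d, w (x, y) * g' (x, y) (0, 1)) x) ?_
  · simpa only [mul_comm (w' (x, _) (0, 1))] using hlim'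
  filter_upwards [hmem] with z hz
  -- `i s t` is integrability of `w(s,·) g_y(t,·)`, `j t` that of `w_y(x,·) g(t,·)`.
  have i : ∀ s ∈ Icc a b, ∀ t ∈ Icc a b,
      IntervalIntegrable (fun y => w (s, y) * g' (t, y) (0, 1)) volume c d := fun s hs t ht =>
    ((continuousOn_slice hwcont hs).mul (continuousOn_slice hgy ht)).intervalIntegrable_of_Icc hcd
  have j : ∀ t ∈ Icc a b,
      IntervalIntegrable (fun y => w' (x, y) (0, 1) * g (t, y)) volume c d := fun t ht =>
    ((continuousOn_slice hwy hxI).mul (continuousOn_slice hgcont ht)).intervalIntegrable_of_Icc hcd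
  have parts : ∀ t ∈ Icc a b, ∫ y in c..d, w (x, y) * g' (t, y) (0, 1)
      = - ∫ y in c..d, w' (x, y) (0, 1) * g (t, y) := by
    intro t ht
    have := intervalIntegral.integral_mul_deriv_eq_deriv_mul_of_hasDerivWithinAt
      (u := fun y => w (x, y)) (v := fun y => g (t, y)) (u' := fun y => w' (x, y) (0, 1))
      (v' := fun y => g' (t, y) (0, 1)) (a := c) (b := d)
      (fun y hy => by rw [uIcc_of_le hcd] at hy ⊢; exact hasDerivWithinAt_snd hw hxI hy)
      (fun y hy => by rw [uIcc_of_le hcd] at hy ⊢; exact hasDerivWithinAt_snd hg ht hy)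
      (intervalIntegrable_slice hcd hwy hxI) (intervalIntegrable_slice hcd hgy ht)
    rw [this, hwc x hxI, hwd x hxI]
    ring
  have e1 : ∫ y in c..d, (z - x)⁻¹ * (w (z, y) - w (x, y)) * g' (z, y) (0, 1)
      = (z - x)⁻¹ * ((∫ y in c..d, w (z, y) * g' (z, y) (0, 1))
        - ∫ y in c..d, w (x, y) * g' (z, y) (0, 1)) := by
    rw [← intervalIntegral.integral_sub (i z hz z hz) (i x hxI z hz),
      ← intervalIntegral.integral_const_mul]
    congr 1; ext y; ring
  have e2 : ∫ y in c..d, (z - x)⁻¹ * (g (z, y) - g (x, y)) * w' (x, y) (0, 1)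
      = (z - x)⁻¹ * ((∫ y in c..d, w' (x, y) (0, 1) * g (z, y))
        - ∫ y in c..d, w' (x, y) (0, 1) * g (x, y)) := by
    rw [← intervalIntegral.integral_sub (j z hz) (j x hxI),
      ← intervalIntegral.integral_const_mul]
    congr 1; ext y; ring
  rw [e1, e2, parts z hz, slope_def_field, parts x hxI, div_eq_inv_mul]
  ring

/-- The bracket `w_x g_y - w_y g_x` of `C¹` functions integrates to zero over a rectangle on whose
boundary `w` vanishes. -/
lemma integral_bracket_eq_zero (hab : a ≤ b) (hcd : c ≤ d)
    (hw : ∀ p ∈ Icc a b ×ˢ Icc c d, HasFDerivWithinAt w (w' p) (Icc a b ×ˢ Icc c d) p)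
    (hg : ∀ p ∈ Icc a b ×ˢ Icc c d, HasFDerivWithinAt g (g' p) (Icc a b ×ˢ Icc c d) p)
    (hw' : ContinuousOn w' (Icc a b ×ˢ Icc c d)) (hg' : ContinuousOn g' (Icc a b ×ˢ Icc c d))
    (hwx : ∀ x ∈ Icc a b, ∀ y ∈ ({c, d} : Set ℝ), w (x, y) = 0)
    (hwy : ∀ x ∈ ({a, b} : Set ℝ), ∀ y ∈ Icc c d, w (x, y) = 0) :
    ∫ p in Icc a b ×ˢ Icc c d, (w' p (1, 0) * g' p (0, 1) - w' p (0, 1) * g' p (1, 0)) = 0 := by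
  have hwcont : ContinuousOn w (Icc a b ×ˢ Icc c d) := fun p hp => (hw p hp).continuousWithinAt
  have hbr : ContinuousOn (fun p => w' p (1, 0) * g' p (0, 1) - w' p (0, 1) * g' p (1, 0))
      (Icc a b ×ˢ Icc c d) := by fun_prop
  have hint := hbr.integrableOn_compact (μ := volume) (isCompact_Icc.prod isCompact_Icc)
  rw [Measure.volume_eq_prod] at hint ⊢
  rw [setIntegral_prod _ hint]
  have hA := intervalIntegral.integral_eq_sub_of_hasDerivAt_of_le hab
    (continuousOn_integral_slice hcd (k := fun p => w p * g' p (0, 1)) (by fun_prop))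
    (fun x hx => hasDerivAt_slice hcd hw hg hw' hg' (fun x hx => hwx x hx c (by simp))
      (fun x hx => hwx x hx d (by simp)) hx)
    ((continuousOn_integral_slice hcd hbr).intervalIntegrable_of_Icc hab)
  have hz : ∀ x ∈ ({a, b} : Set ℝ), ∫ y in c..d, w (x, y) * g' (x, y) (0, 1) = 0 := by
    intro x hx
    rw [intervalIntegral.integral_congr (g := fun _ => (0 : ℝ)) ?_,
      intervalIntegral.integral_zero]
    intro y hy
    rw [uIcc_of_le hcd] at hy
    simp [hwy x hx y hy]
  rw [hz a (by simp), hz b (by simp), sub_zero, intervalIntegral.integral_of_le hab,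
    ← integral_Icc_eq_integral_Ioc] at hA
  simpa only [intervalIntegral.integral_of_le hcd, ← integral_Icc_eq_integral_Ioc] using hA

end Bracket

/-- **The signed area is a null Lagrangian on a rectangle.**
If `φ, ψ : R → ℝ²` are `C¹` maps on the closed rectangle `R = [a,b] × [c,d]`
which agree on the boundary of the rectangle, then the integrals of their
Jacobian determinants over `R` coincide. -/
theorem integral_jacobian_eq_of_eqOn_boundary
    (a b c d : ℝ) (hab : a ≤ b) (hcd : c ≤ d)
    (φ ψ : ℝ × ℝ → ℝ × ℝ)
    (R : Set (ℝ × ℝ)) (hR : R = Set.Icc a b ×ˢ Set.Icc c d)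
    (hφ : ContDiffOn ℝ 1 φ R) (hψ : ContDiffOn ℝ 1 ψ R)
    (hbdy : ∀ p ∈ (({a, b} : Set ℝ) ×ˢ Set.Icc c d) ∪ (Set.Icc a b ×ˢ ({c, d} : Set ℝ)),
      φ p = ψ p) :
    ∫ p in R, LinearMap.det (fderivWithin ℝ φ R p).toLinearMap
      = ∫ p in R, LinearMap.det (fderivWithin ℝ ψ R p).toLinearMap := by
  -- A degenerate rectangle is a null set, so both integrals vanish.
  by_cases hdeg : a = b ∨ c = d
  · have h0 : volume R = 0 := by
      rw [hR, Measure.volume_eq_prod, Measure.prod_prod]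
      rcases hdeg with h | h <;> simp [h]
    rw [setIntegral_measure_zero _ h0, setIntegral_measure_zero _ h0]
  push Not at hdeg
  have hab' := lt_of_le_of_ne hab hdeg.1
  have hcd' := lt_of_le_of_ne hcd hdeg.2
  have hu : UniqueDiffOn ℝ R := hR ▸ (uniqueDiffOn_Icc hab').prod (uniqueDiffOn_Icc hcd')
  have hK : IsCompact R := hR ▸ isCompact_Icc.prod isCompact_Icc
  have cφ : ContinuousOn (fderivWithin ℝ φ R) R := hφ.continuousOn_fderivWithin hu le_rfl
  have cψ : ContinuousOn (fderivWithin ℝ ψ R) R := hψ.continuousOn_fderivWithin hu le_rfl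
  have dφ : ∀ p ∈ R, HasFDerivWithinAt φ (fderivWithin ℝ φ R p) R p := fun p hp =>
    (hφ.differentiableOn one_ne_zero p hp).hasFDerivWithinAt
  have dψ : ∀ p ∈ R, HasFDerivWithinAt ψ (fderivWithin ℝ ψ R p) R p := fun p hp =>
    (hψ.differentiableOn one_ne_zero p hp).hasFDerivWithinAt
  simp only [det_prod_eq, ContinuousLinearMap.coe_coe]
  generalize fderivWithin ℝ φ R = F at *
  generalize fderivWithin ℝ ψ R = G at *
  let π₁ := ContinuousLinearMap.fst ℝ ℝ ℝ
  let π₂ := ContinuousLinearMap.snd ℝ ℝ ℝ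
  have hx : ∀ x ∈ Icc a b, ∀ y ∈ ({c, d} : Set ℝ), φ (x, y) = ψ (x, y) :=
    fun x hx y hy => hbdy _ (Or.inr ⟨hx, hy⟩)
  have hy : ∀ x ∈ ({a, b} : Set ℝ), ∀ y ∈ Icc c d, φ (x, y) = ψ (x, y) :=
    fun x hx y hy => hbdy _ (Or.inl ⟨hx, hy⟩)
  subst hR
  have I1 := integral_bracket_eq_zero hab hcd
    (w := fun p => (φ p - ψ p).1) (w' := fun p => π₁.comp (F p - G p))
    (g := fun p => (φ p).2) (g' := fun p => π₂.comp (F p))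
    (fun p hp => π₁.hasFDerivAt.comp_hasFDerivWithinAt p ((dφ p hp).sub (dψ p hp)))
    (fun p hp => π₂.hasFDerivAt.comp_hasFDerivWithinAt p (dφ p hp))
    (by fun_prop) (by fun_prop)
    (fun x h y h' => by simp [hx x h y h']) (fun x h y h' => by simp [hy x h y h'])
  have I2 := integral_bracket_eq_zero hab hcd
    (w := fun p => (φ p - ψ p).2) (w' := fun p => π₂.comp (F p - G p))
    (g := fun p => (ψ p).1) (g' := fun p => π₁.comp (G p))
    (fun p hp => π₂.hasFDerivAt.comp_hasFDerivWithinAt p ((dφ p hp).sub (dψ p hp)))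
    (fun p hp => π₁.hasFDerivAt.comp_hasFDerivWithinAt p (dψ p hp))
    (by fun_prop) (by fun_prop)
    (fun x h y h' => by simp [hx x h y h']) (fun x h y h' => by simp [hy x h y h'])
  rw [← sub_eq_zero, ← integral_sub (ContinuousOn.integrableOn_compact hK (by fun_prop))
    (ContinuousOn.integrableOn_compact hK (by fun_prop))]
  have I3 := congrArg₂ (· - ·) I1 I2
  simp only [sub_zero] at I3
  rw [← integral_sub (ContinuousOn.integrableOn_compact hK (by fun_prop))
    (ContinuousOn.integrableOn_compact hK (by fun_prop))] at I3
  refine Eq.trans ?_ I3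
  congr 1
  ext p
  simp [π₁, π₂]
  ring
end

section
/- (Quasisymmetric extension.) There exists a function K : (0,∞) → (0,∞) with the following property: for every k > 0, every function f that is k-quasisymmetric on a closed interval I = [a,b] (with a < b) admits an extension to a function f̃ : ℝ → ℝ that is k̃-quasisymmetric on the entire real axis for some constant k̃ ≤ K(k); in particular f̃(x) = f(x) for all x ∈ [a,b]. -/
/-!
The extension is obtained by reflecting the graph of `f` in its two end points, over and over.
After an affine change of variables `f` lives on `[0, 1/2]` with `f 0 = 0`, `f (1/2) = 1/2`, and
the reflected function `g` is odd and satisfies `g (x + 1) = g x + 1`; hence it is also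
point-symmetric about `1/2`. Since `g` is odd, only the upper bound
`g (x + t) - g x ≤ K (g x - g (x - t))` has to be proved.

* If `t ≤ 1/4`, the interval `[x - t, x + t]` lies, up to an integer translation, within distance
  `1/2` of `0` or of `1/2`. Both are centres of symmetry, and the estimate for an odd function
  that is quasisymmetric on `[0, 1/2]` is `odd_local_bound`.
* If `t ≥ 1/4`, the previous case at scale `1/4` bounds `g x - g (x - 1/4)` from below, because
  four consecutive intervals of length `1/4` have total increment `1` (`increment_lower_bound`).
  Comparing with `|g x - x| ≤ 1` then handles all such `t` (`global_bound`).
-/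

/-- A continuous, strictly increasing function `f` on an interval `I ⊆ ℝ` is
`k`-quasisymmetric on `I` if
`1/k ≤ (f (x+t) - f x)/(f x - f (x-t)) ≤ k`
for all `x, x - t, x + t ∈ I` with `t > 0`. -/
def QuasisymmetricOn (f : ℝ → ℝ) (k : ℝ) (I : Set ℝ) : Prop :=
  ContinuousOn f I ∧ StrictMonoOn f I ∧
    ∀ x t : ℝ, 0 < t → x ∈ I → x - t ∈ I → x + t ∈ I →
      1 / k ≤ (f (x + t) - f x) / (f x - f (x - t)) ∧
        (f (x + t) - f x) / (f x - f (x - t)) ≤ k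

/-- An odd increasing function that is `k`-quasisymmetric on `[0, 1/2]` is quasisymmetric at small
scales near `0`. When `0` lies between `x - t` and `x` (with `x ≥ 0`), both increments are
comparable to `φ t` by the doubling property `φ (2u) ≤ (1 + k) φ u`. -/
lemma odd_local_bound {φ : ℝ → ℝ} {k : ℝ} (hk : 0 < k) (hmono : Monotone φ)
    (hodd : ∀ x, φ (-x) = -φ x)
    (hup : ∀ x t, 0 < t → 0 ≤ x - t → x + t ≤ 1 / 2 → φ (x + t) - φ x ≤ k * (φ x - φ (x - t)))
    (hlo : ∀ x t, 0 < t → 0 ≤ x - t → x + t ≤ 1 / 2 → φ x - φ (x - t) ≤ k * (φ (x + t) - φ x))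
    (x t : ℝ) (hx : |x| ≤ 1 / 4) (ht : 0 < t) (ht' : t ≤ 1 / 4) :
    φ (x + t) - φ x ≤ 2 * (1 + k) ^ 2 * (φ x - φ (x - t)) := by
  have h0 : φ 0 = 0 := by
    have := hodd 0
    simp only [neg_zero] at this
    linarith
  have hdouble : ∀ u, 0 < u → u ≤ 1 / 4 → φ (2 * u) ≤ (1 + k) * φ u := by
    intro u hu hu'
    have := hup u u hu (by linarith) (by linarith)
    rw [sub_self, h0, ← two_mul] at this
    linarith
  have hkK : k ≤ 2 * (1 + k) ^ 2 := by nlinarith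
  obtain ⟨hx1, hx2⟩ := abs_le.mp hx
  rcases le_total 0 x with hx0 | hx0
  · rcases le_total t x with htx | htx
    · have h1 := hup x t ht (by linarith) (by linarith)
      have h2 : 0 ≤ φ x - φ (x - t) := sub_nonneg.mpr (hmono (by linarith))
      nlinarith
    · have h1 : φ (x - t) = -φ (t - x) := by rw [← hodd]; congr 1; ring
      have hxn : 0 ≤ φ x := h0 ▸ hmono hx0
      have htn : 0 ≤ φ (t - x) := h0 ▸ hmono (by linarith)
      -- one of `x`, `t - x` is at least `t / 2`
      have h2 : φ (t / 2) ≤ φ x + φ (t - x) := by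
        rcases le_total (t / 2) x with h | h
        · linarith [hmono h]
        · linarith [hmono (show t / 2 ≤ t - x by linarith)]
      have h3 := hdouble (t / 2) (by linarith) (by linarith)
      have h4 := hdouble t ht ht'
      rw [show 2 * (t / 2) = t by ring] at h3
      have h5 : φ (x + t) ≤ φ (2 * t) := hmono (by linarith)
      have h6 : (1 + k) * φ t ≤ (1 + k) * ((1 + k) * φ (t / 2)) := by gcongr
      have h7 : (1 + k) ^ 2 * φ (t / 2) ≤ (1 + k) ^ 2 * (φ x + φ (t - x)) := by gcongr
      have h8 : 0 ≤ (1 + k) ^ 2 * (φ x + φ (t - x)) := by positivity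
      rw [h1]
      nlinarith
  · obtain ⟨y, rfl⟩ : ∃ y, x = -y := ⟨-x, by ring⟩
    have e1 : φ (-y + t) = -φ (y - t) := by rw [← hodd]; congr 1; ring
    have e2 : φ (-y - t) = -φ (y + t) := by rw [← hodd]; congr 1; ring
    rw [e1, e2, hodd]
    have hy0 : 0 ≤ y := by linarith
    have hpos : 0 ≤ φ (y + t) - φ y := sub_nonneg.mpr (hmono (by linarith))
    rcases le_total t y with hty | hty
    · have h1 := hlo y t ht (by linarith) (by linarith)
      nlinarith
    · have h1 : φ (y - t) = -φ (t - y) := by rw [← hodd]; congr 1; ring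
      have h2 : φ y ≤ φ t := hmono hty
      have h3 : φ (t - y) ≤ φ t := hmono (by linarith)
      have h4 : φ t ≤ φ (y + t) := hmono (by linarith)
      have h5 : φ y ≤ k * (φ (y + t) - φ y) := by
        rcases hy0.eq_or_lt with rfl | hy
        · rw [h0] at hpos ⊢
          positivity
        · have h6 := hlo y y hy (by linarith) (by linarith)
          rw [sub_self, h0] at h6
          have h7 : φ (y + y) ≤ φ (y + t) := hmono (by linarith)
          nlinarith
      have h8 : 0 ≤ k * (φ (y + t) - φ y) := by positivity
      have h9 : 0 ≤ k ^ 2 * (φ (y + t) - φ y) := by positivity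
      rw [h1]
      nlinarith

/-- Four consecutive increments over intervals of length `1/4` add up to `1`, and each is at most
`C` times the previous one. -/
lemma increment_lower_bound {g : ℝ → ℝ} {C : ℝ} (hC : 0 < C) (hper : ∀ x, g (x + 1) = g x + 1)
    (hloc : ∀ x, g (x + 1 / 4) - g x ≤ C * (g x - g (x - 1 / 4))) (x : ℝ) :
    1 ≤ (1 + C + C ^ 2 + C ^ 3) * (g x - g (x - 1 / 4)) := by
  have h1 := hloc x
  have h2 := hloc (x + 1 / 4)
  have h3 := hloc (x + 1 / 4 + 1 / 4)
  have h4 := hper (x - 1 / 4)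
  rw [show x - 1 / 4 + 1 = x + 1 / 4 + 1 / 4 + 1 / 4 by ring] at h4
  simp only [add_sub_cancel_right] at h2 h3
  have h5 := mul_le_mul_of_nonneg_left h1 hC.le
  have h6 := mul_le_mul_of_nonneg_left (h2.trans h5) hC.le
  nlinarith

lemma global_bound {g : ℝ → ℝ} {C : ℝ} (hC : 0 < C) (hmono : Monotone g)
    (hper : ∀ x, g (x + 1) = g x + 1) (hnear : ∀ x, |g x - x| ≤ 1)
    (hloc : ∀ x t, 0 < t → t ≤ 1 / 4 → g (x + t) - g x ≤ C * (g x - g (x - t)))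
    (x t : ℝ) (ht : 0 < t) :
    g (x + t) - g x ≤ 5 * (1 + C + C ^ 2 + C ^ 3) * (g x - g (x - t)) := by
  have hS : 1 ≤ 1 + C + C ^ 2 + C ^ 3 := by
    have : 0 ≤ C + C ^ 2 + C ^ 3 := by positivity
    linarith
  have hCS : C ≤ 5 * (1 + C + C ^ 2 + C ^ 3) := by
    have : 0 ≤ C ^ 2 + C ^ 3 := by positivity
    linarith
  have hD : 0 ≤ g x - g (x - t) := sub_nonneg.mpr (hmono (by linarith))
  rcases le_total t (1 / 4) with h | h
  · exact (hloc x t ht h).trans (by gcongr)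
  · have a1 := abs_le.mp (hnear (x + t))
    have a2 := abs_le.mp (hnear x)
    have a3 := abs_le.mp (hnear (x - t))
    rcases le_total t 3 with h3 | h3
    · have h4 := increment_lower_bound hC hper (fun y => hloc y _ (by norm_num) le_rfl) x
      have h5 : g (x - t) ≤ g (x - 1 / 4) := hmono (by linarith)
      have h6 : (1 + C + C ^ 2 + C ^ 3) * (g x - g (x - 1 / 4)) ≤
          (1 + C + C ^ 2 + C ^ 3) * (g x - g (x - t)) := by gcongr
      linarith
    · have h6 : 1 * (g x - g (x - t)) ≤
          (1 + C + C ^ 2 + C ^ 3) * (g x - g (x - t)) := by gcongr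
      linarith

/-- The point reflection of `f` in `(1/2, 1/2)`, glued to `f` itself on `(-∞, 1/2]`. -/
noncomputable def reflectHalf (f : ℝ → ℝ) (y : ℝ) : ℝ :=
  if y ≤ 1 / 2 then f y else 1 - f (1 - y)

/-- The extension of `f|[0, 1/2]` to the line generated by the point reflections in `(0, 0)` and
`(1/2, 1/2)`; their composition is the translation by `(1, 1)`. -/
noncomputable def reflectExtend (f : ℝ → ℝ) (x : ℝ) : ℝ :=
  ⌊x⌋ + reflectHalf f (Int.fract x)

section Reflect

variable {f : ℝ → ℝ}

lemma reflectHalf_one_sub (h2 : f (1 / 2) = 1 / 2) (y : ℝ) :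
    reflectHalf f (1 - y) = 1 - reflectHalf f y := by
  unfold reflectHalf
  rcases lt_trichotomy y (1 / 2) with h | h | h
  · rw [if_neg (by linarith), if_pos h.le, sub_sub_cancel]
  · subst h
    norm_num at h2 ⊢
    rw [h2]; norm_num
  · rw [if_pos (by linarith), if_neg (by linarith)]; ring

lemma reflectHalf_strictMonoOn (h2 : f (1 / 2) = 1 / 2)
    (hmono : StrictMonoOn f (Set.Icc 0 (1 / 2))) :
    StrictMonoOn (reflectHalf f) (Set.Icc 0 1) := by
  have hlow : StrictMonoOn (reflectHalf f) (Set.Icc 0 (1 / 2)) := by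
    intro x hx y hy hxy
    simp only [reflectHalf, if_pos hx.2, if_pos hy.2]
    exact hmono hx hy hxy
  have hhigh : StrictMonoOn (reflectHalf f) (Set.Icc (1 / 2) 1) := by
    intro x hx y hy hxy
    have := hlow (a := 1 - y) ⟨by linarith [hy.2], by linarith [hy.1]⟩
      (b := 1 - x) ⟨by linarith [hx.2], by linarith [hx.1]⟩ (by linarith)
    rw [reflectHalf_one_sub h2, reflectHalf_one_sub h2] at this
    linarith
  have := hlow.union hhigh (c := 1 / 2) ⟨⟨by norm_num, le_rfl⟩, fun _ h => h.2⟩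
    ⟨⟨le_rfl, by norm_num⟩, fun _ h => h.1⟩
  rwa [Set.Icc_union_Icc_eq_Icc (by norm_num) (by norm_num)] at this

lemma reflectHalf_continuousOn (h2 : f (1 / 2) = 1 / 2)
    (hcont : ContinuousOn f (Set.Icc 0 (1 / 2))) :
    ContinuousOn (reflectHalf f) (Set.Icc 0 1) := by
  have hlow : ContinuousOn (reflectHalf f) (Set.Icc 0 (1 / 2)) :=
    hcont.congr fun x hx => if_pos hx.2
  have hhigh : ContinuousOn (reflectHalf f) (Set.Icc (1 / 2) 1) := by
    have h : ContinuousOn (fun x => 1 - reflectHalf f (1 - x)) (Set.Icc (1 / 2) 1) := by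
      refine continuousOn_const.sub (hlow.comp (by fun_prop) ?_)
      intro x hx
      exact ⟨by linarith [hx.2], by linarith [hx.1]⟩
    refine h.congr fun x _ => ?_
    simp only [reflectHalf_one_sub h2, sub_sub_cancel]
  have := hlow.union_of_isClosed hhigh isClosed_Icc isClosed_Icc
  rwa [Set.Icc_union_Icc_eq_Icc (by norm_num) (by norm_num)] at this

lemma reflectHalf_zero (h0 : f 0 = 0) : reflectHalf f 0 = 0 := by
  simp [reflectHalf, h0]

lemma reflectHalf_one (h0 : f 0 = 0) : reflectHalf f 1 = 1 := by
  norm_num [reflectHalf, h0]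

lemma reflectExtend_add_one (x : ℝ) : reflectExtend f (x + 1) = reflectExtend f x + 1 := by
  simp only [reflectExtend, Int.floor_add_one, Int.fract_add_one, Int.cast_add, Int.cast_one]
  ring

lemma reflectExtend_add_int (x : ℝ) (n : ℤ) :
    reflectExtend f (x + n) = reflectExtend f x + n := by
  simp only [reflectExtend, Int.floor_add_intCast, Int.fract_add_intCast, Int.cast_add]
  ring

lemma reflectExtend_neg (h0 : f 0 = 0) (h2 : f (1 / 2) = 1 / 2) (x : ℝ) :
    reflectExtend f (-x) = -reflectExtend f x := by
  by_cases hx : Int.fract x = 0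
  · obtain ⟨n, rfl⟩ := Int.fract_eq_zero_iff.mp hx
    have h : Int.fract (-(n : ℝ)) = 0 := Int.fract_neg_eq_zero.mpr hx
    have h' : ⌊-(n : ℝ)⌋ = -n := by
      rw [← Int.cast_neg, Int.floor_intCast]
    simp only [reflectExtend, hx, h, h', Int.floor_intCast, reflectHalf_zero h0]
    push_cast; ring
  · have h := Int.fract_neg hx
    have e1 := Int.floor_add_fract x
    have e2 := Int.floor_add_fract (-x)
    rw [reflectExtend, reflectExtend, h, reflectHalf_one_sub h2]
    rw [h] at e2
    linarith

lemma reflectExtend_one_sub (h0 : f 0 = 0) (h2 : f (1 / 2) = 1 / 2) (x : ℝ) :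
    reflectExtend f (1 - x) = 1 - reflectExtend f x := by
  rw [show 1 - x = -x + 1 by ring, reflectExtend_add_one, reflectExtend_neg h0 h2]; ring

lemma reflectExtend_eq {x : ℝ} (hx : 0 ≤ x) (hx' : x ≤ 1 / 2) :
    reflectExtend f x = f x := by
  have h1 : ⌊x⌋ = 0 := Int.floor_eq_zero_iff.mpr ⟨hx, by linarith⟩
  have h2 : Int.fract x = x := Int.fract_eq_self.mpr ⟨hx, by linarith⟩
  rw [reflectExtend, h1, h2, reflectHalf, if_pos hx', Int.cast_zero, zero_add]

lemma reflectExtend_continuous (h0 : f 0 = 0) (h2 : f (1 / 2) = 1 / 2)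
    (hcont : ContinuousOn f (Set.Icc 0 (1 / 2))) : Continuous (reflectExtend f) := by
  -- `g x - x` is a continuous function of `fract x`, with equal values at `0` and `1`
  have h : Continuous ((fun y => reflectHalf f y - y) ∘ Int.fract) :=
    ContinuousOn.comp_fract'' ((reflectHalf_continuousOn h2 hcont).sub continuousOn_id)
      (by simp [reflectHalf_zero h0, reflectHalf_one h0])
  refine (h.add continuous_id).congr fun x => ?_
  have := Int.floor_add_fract x
  simp only [Pi.add_apply, Function.comp_apply, id, reflectExtend]
  linarith

lemma reflectHalf_mem (h0 : f 0 = 0) (h2 : f (1 / 2) = 1 / 2)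
    (hmono : StrictMonoOn f (Set.Icc 0 (1 / 2))) (x : ℝ) :
    0 ≤ reflectHalf f (Int.fract x) ∧ reflectHalf f (Int.fract x) < 1 := by
  have hm := reflectHalf_strictMonoOn h2 hmono
  have hx : Int.fract x ∈ Set.Icc (0 : ℝ) 1 := ⟨Int.fract_nonneg x, (Int.fract_lt_one x).le⟩
  constructor
  · have := hm.monotoneOn ⟨le_rfl, zero_le_one⟩ hx hx.1
    rwa [reflectHalf_zero h0] at this
  · have := hm hx ⟨zero_le_one, le_rfl⟩ (Int.fract_lt_one x)
    rwa [reflectHalf_one h0] at this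

lemma reflectExtend_strictMono (h0 : f 0 = 0) (h2 : f (1 / 2) = 1 / 2)
    (hmono : StrictMonoOn f (Set.Icc 0 (1 / 2))) : StrictMono (reflectExtend f) := by
  intro x y hxy
  have hx := reflectHalf_mem h0 h2 hmono x
  have hy := reflectHalf_mem h0 h2 hmono y
  rcases (Int.floor_mono hxy.le).eq_or_lt with h | h
  · have := reflectHalf_strictMonoOn h2 hmono (a := Int.fract x) (b := Int.fract y)
      ⟨Int.fract_nonneg x, (Int.fract_lt_one x).le⟩ ⟨Int.fract_nonneg y, (Int.fract_lt_one y).le⟩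
      (by rw [Int.fract, Int.fract, h]; linarith)
    simp only [reflectExtend, h]
    linarith
  · have : (⌊x⌋ : ℝ) + 1 ≤ ⌊y⌋ := by exact_mod_cast h
    simp only [reflectExtend]
    linarith

lemma reflectExtend_near (h0 : f 0 = 0) (h2 : f (1 / 2) = 1 / 2)
    (hmono : StrictMonoOn f (Set.Icc 0 (1 / 2))) (x : ℝ) : |reflectExtend f x - x| ≤ 1 := by
  have hx := reflectHalf_mem h0 h2 hmono x
  have h1 := Int.floor_add_fract x
  have h3 := Int.fract_nonneg x
  have h4 := Int.fract_lt_one x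
  rw [abs_le, reflectExtend]
  constructor <;> linarith

lemma reflectExtend_local {k : ℝ} (hk : 0 < k) (h0 : f 0 = 0) (h2 : f (1 / 2) = 1 / 2)
    (hmono : StrictMonoOn f (Set.Icc 0 (1 / 2)))
    (hup : ∀ x t, 0 < t → 0 ≤ x - t → x + t ≤ 1 / 2 → f (x + t) - f x ≤ k * (f x - f (x - t)))
    (hlo : ∀ x t, 0 < t → 0 ≤ x - t → x + t ≤ 1 / 2 → f x - f (x - t) ≤ k * (f (x + t) - f x))
    (x t : ℝ) (ht : 0 < t) (ht' : t ≤ 1 / 4) :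
    reflectExtend f (x + t) - reflectExtend f x ≤
      2 * (1 + k) ^ 2 * (reflectExtend f x - reflectExtend f (x - t)) := by
  have hg := (reflectExtend_strictMono h0 h2 hmono).monotone
  -- translate by an integer so that `x ∈ [-1/4, 3/4)`
  obtain ⟨n, y, rfl, hy1, hy2⟩ : ∃ (n : ℤ) (y : ℝ), x = y + n ∧ -(1 / 4) ≤ y ∧ y < 3 / 4 := by
    refine ⟨⌊x + 1 / 4⌋, x - ⌊x + 1 / 4⌋, by ring, ?_, ?_⟩
    · linarith [Int.floor_le (x + 1 / 4)]
    · linarith [Int.lt_floor_add_one (x + 1 / 4)]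
  rw [show y + n + t = y + t + n by ring, show y + n - t = y - t + n by ring]
  simp only [reflectExtend_add_int, add_sub_add_right_eq_sub]
  rcases le_total y (1 / 4) with h | h
  · refine odd_local_bound hk hg (reflectExtend_neg h0 h2) ?_ ?_ y t (abs_le.mpr ⟨hy1, h⟩) ht ht'
    · intro x t ht h1 h3
      rw [reflectExtend_eq (by linarith) h3, reflectExtend_eq h1 (by linarith),
        reflectExtend_eq (x := x) (by linarith) (by linarith)]
      exact hup x t ht h1 h3
    · intro x t ht h1 h3
      rw [reflectExtend_eq (by linarith) h3, reflectExtend_eq h1 (by linarith),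
        reflectExtend_eq (x := x) (by linarith) (by linarith)]
      exact hlo x t ht h1 h3
  · -- recentre at the symmetry point `1/2`; the reflection swaps the two bounds for `f`
    have key : ∀ u, 0 ≤ u → u ≤ 1 / 2 →
        reflectExtend f (1 / 2 + u) - 1 / 2 = 1 / 2 - f (1 / 2 - u) := by
      intro u hu hu'
      rw [show 1 / 2 + u = 1 - (1 / 2 - u) by ring, reflectExtend_one_sub h0 h2,
        reflectExtend_eq (by linarith) (by linarith)]
      ring
    have := odd_local_bound (φ := fun u => reflectExtend f (1 / 2 + u) - 1 / 2) hk ?_ ?_ ?_ ?_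
      (y - 1 / 2) t (abs_le.mpr ⟨by linarith, by linarith⟩) ht ht'
    · simp only [sub_sub_sub_cancel_right] at this
      rwa [show 1 / 2 + (y - 1 / 2 + t) = y + t by ring, show 1 / 2 + (y - 1 / 2) = y by ring,
        show 1 / 2 + (y - 1 / 2 - t) = y - t by ring] at this
    · intro u v huv
      exact sub_le_sub_right (hg (by linarith)) _
    · intro u
      have := reflectExtend_one_sub h0 h2 (1 / 2 + u)
      rw [show 1 - (1 / 2 + u) = 1 / 2 + -u by ring] at this
      simp only [this]
      ring
    · intro x t ht h1 h3
      have := hlo (1 / 2 - x) t ht (by linarith) (by linarith)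
      simp only [key (x + t) (by linarith) h3, key x (by linarith) (by linarith),
        key (x - t) h1 (by linarith)]
      rw [show 1 / 2 - (x + t) = 1 / 2 - x - t by ring, show 1 / 2 - (x - t) = 1 / 2 - x + t by ring]
      linarith
    · intro x t ht h1 h3
      have := hup (1 / 2 - x) t ht (by linarith) (by linarith)
      simp only [key (x + t) (by linarith) h3, key x (by linarith) (by linarith),
        key (x - t) h1 (by linarith)]
      rw [show 1 / 2 - (x + t) = 1 / 2 - x - t by ring, show 1 / 2 - (x - t) = 1 / 2 - x + t by ring]
      linarith

end Reflect

/-- The bound for the quasisymmetry constant of the extension; `2 * (1 + k) ^ 2` is the constant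
at scales up to a quarter of the period. -/
noncomputable def extensionConst (k : ℝ) : ℝ :=
  5 * (1 + 2 * (1 + k) ^ 2 + (2 * (1 + k) ^ 2) ^ 2 + (2 * (1 + k) ^ 2) ^ 3)

lemma extensionConst_pos {k : ℝ} (hk : 0 < k) : 0 < extensionConst k := by
  unfold extensionConst; positivity

lemma quasisymmetric_univ_of_normalized {f : ℝ → ℝ} {k : ℝ} (hk : 0 < k) (h0 : f 0 = 0)
    (h2 : f (1 / 2) = 1 / 2) (hf : QuasisymmetricOn f k (Set.Icc 0 (1 / 2))) :
    QuasisymmetricOn (reflectExtend f) (extensionConst k) Set.univ := by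
  obtain ⟨hcont, hmono, hqs⟩ := hf
  have hg := reflectExtend_strictMono h0 h2 hmono
  have hquot : ∀ x t, 0 < t → 0 ≤ x - t → x + t ≤ 1 / 2 →
      f (x + t) - f x ≤ k * (f x - f (x - t)) ∧ f x - f (x - t) ≤ k * (f (x + t) - f x) := by
    intro x t ht h1 h3
    have hxm : x - t ∈ Set.Icc (0 : ℝ) (1 / 2) := ⟨h1, by linarith⟩
    have hx : x ∈ Set.Icc (0 : ℝ) (1 / 2) := ⟨by linarith, by linarith⟩
    have hxp : x + t ∈ Set.Icc (0 : ℝ) (1 / 2) := ⟨by linarith, h3⟩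
    have hpos : 0 < f x - f (x - t) := sub_pos.mpr (hmono hxm hx (by linarith))
    obtain ⟨ha, hb⟩ := hqs x t ht hx hxm hxp
    rw [div_le_iff₀ hpos] at hb
    rw [div_le_div_iff₀ hk hpos] at ha
    exact ⟨hb, by linarith⟩
  have hbound : ∀ x t, 0 < t → reflectExtend f (x + t) - reflectExtend f x ≤
      extensionConst k * (reflectExtend f x - reflectExtend f (x - t)) :=
    global_bound (by positivity) hg.monotone reflectExtend_add_one
      (reflectExtend_near h0 h2 hmono)
      (reflectExtend_local hk h0 h2 hmono (fun x t a b c => (hquot x t a b c).1)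
        (fun x t a b c => (hquot x t a b c).2))
  refine ⟨(reflectExtend_continuous h0 h2 hcont).continuousOn, hg.strictMonoOn _, ?_⟩
  intro x t ht _ _ _
  have hpos : 0 < reflectExtend f x - reflectExtend f (x - t) := sub_pos.mpr (hg (by linarith))
  have h1 := hbound x t ht
  -- the lower bound is the upper bound at `-x`
  have h3 := hbound (-x) t ht
  rw [show -x + t = -(x - t) by ring, show -x - t = -(x + t) by ring] at h3
  simp only [reflectExtend_neg h0 h2] at h3
  rw [div_le_iff₀ hpos, div_le_div_iff₀ (extensionConst_pos hk) hpos]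
  exact ⟨by linarith, h1⟩

/-- Quasisymmetry is preserved by increasing affine changes of variable in source and target. -/
lemma QuasisymmetricOn.affine {f : ℝ → ℝ} {k : ℝ} {I J : Set ℝ} (hf : QuasisymmetricOn f k I)
    {p q c d : ℝ} (hp : 0 < p) (hc : 0 < c) (hJ : ∀ x ∈ J, p * x + q ∈ I) :
    QuasisymmetricOn (fun x => c * f (p * x + q) + d) k J := by
  obtain ⟨hcont, hmono, hqs⟩ := hf
  refine ⟨?_, ?_, ?_⟩
  · exact (continuousOn_const.mul (hcont.comp (by fun_prop) hJ)).add continuousOn_const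
  · intro x hx y hy hxy
    have := hmono (hJ x hx) (hJ y hy) (by gcongr)
    simp only
    gcongr
  · intro x t ht hx hxm hxp
    have e1 : p * (x + t) + q = p * x + q + p * t := by ring
    have e2 : p * (x - t) + q = p * x + q - p * t := by ring
    have h := hqs (p * x + q) (p * t) (by positivity) (hJ x hx) (e2 ▸ hJ _ hxm) (e1 ▸ hJ _ hxp)
    simp only [e1, e2, add_sub_add_right_eq_sub, ← mul_sub]
    rwa [mul_div_mul_left _ _ hc.ne']

/-- **Quasisymmetric extension (Lehto–Virtanen).** There is a function
`K : (0,∞) → (0,∞)` such that every function which is `k`-quasisymmetric on a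
closed interval `[a,b]` extends to a function which is `k̃`-quasisymmetric on
the whole real axis for some `k̃ ≤ K k`. -/
theorem quasisymmetric_extension :
    ∃ K : ℝ → ℝ, (∀ k : ℝ, 0 < k → 0 < K k) ∧
      ∀ k : ℝ, 0 < k → ∀ a b : ℝ, a < b → ∀ f : ℝ → ℝ,
        QuasisymmetricOn f k (Set.Icc a b) →
          ∃ ftilde : ℝ → ℝ, ∃ ktilde : ℝ, 0 < ktilde ∧ ktilde ≤ K k ∧
            QuasisymmetricOn ftilde ktilde Set.univ ∧
            ∀ x ∈ Set.Icc a b, ftilde x = f x := by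
  refine ⟨extensionConst, fun k hk => extensionConst_pos hk, ?_⟩
  intro k hk a b hab f hf
  have hL : 0 < 2 * (b - a) := by linarith
  have hM : 0 < 2 * (f b - f a) := by
    linarith [hf.2.1 (Set.left_mem_Icc.mpr hab.le) (Set.right_mem_Icc.mpr hab.le) hab]
  -- the affine normalization of `f`, sending `[a, b]` and `[f a, f b]` to `[0, 1/2]`
  obtain ⟨f₀, hf₀⟩ : ∃ f₀ : ℝ → ℝ, f₀ = fun u =>
      (2 * (f b - f a))⁻¹ * f (2 * (b - a) * u + a) + -((2 * (f b - f a))⁻¹ * f a) := ⟨_, rfl⟩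
  have hq : QuasisymmetricOn f₀ k (Set.Icc 0 (1 / 2)) := by
    rw [hf₀]
    refine hf.affine hL (inv_pos.mpr hM) fun x hx => ⟨?_, ?_⟩
    · have := mul_nonneg hL.le hx.1
      linarith
    · have := mul_le_mul_of_nonneg_left hx.2 hL.le
      linarith
  have h0 : f₀ 0 = 0 := by simp [hf₀]
  have h2 : f₀ (1 / 2) = 1 / 2 := by
    simp only [hf₀]
    rw [show 2 * (b - a) * (1 / 2) + a = b by ring]
    have : f b - f a ≠ 0 := by linarith
    field_simp
    ring
  refine ⟨fun x => 2 * (f b - f a) *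
      reflectExtend f₀ ((2 * (b - a))⁻¹ * x + -((2 * (b - a))⁻¹ * a)) + f a,
    extensionConst k, extensionConst_pos hk, le_rfl,
    (quasisymmetric_univ_of_normalized hk h0 h2 hq).affine (inv_pos.mpr hL) hM
      fun _ _ => Set.mem_univ _, ?_⟩
  intro x hx
  have hu : (2 * (b - a))⁻¹ * x + -((2 * (b - a))⁻¹ * a) = (x - a) / (2 * (b - a)) := by
    rw [div_eq_inv_mul]; ring
  simp only [hu]
  rw [reflectExtend_eq (div_nonneg (by linarith [hx.1]) hL.le)
    (by rw [div_le_iff₀ hL]; linarith [hx.2])]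
  simp only [hf₀]
  rw [mul_div_cancel₀ _ hL.ne', sub_add_cancel, mul_add, mul_neg, mul_inv_cancel_left₀ hM.ne',
    mul_inv_cancel_left₀ hM.ne']
  ring
end

section
/- (Cotangent formula for the Dirichlet energy of a linear map on a triangle.) Let T ⊆ ℝ² be a nondegenerate triangle with vertices v₁, v₂, v₃, and let α₁, α₂, α₃ denote the interior angles of T at v₁, v₂, v₃ respectively. Let φ : ℝ² → ℝ² be an affine map. Then the Dirichlet energy of φ over T satisfies ½ ∫_T ‖Dφ‖² = ¼ ( cot(α₁)·‖φ(v₂) − φ(v₃)‖² + cot(α₂)·‖φ(v₃) − φ(v₁)‖² + cot(α₃)·‖φ(v₁) − φ(v₂)‖² ), where Dφ is the (constant) derivative of φ and ‖Dφ‖² is the sum of squares of its matrix entries (the squared Frobenius norm), so that ∫_T ‖Dφ‖² = ‖Dφ‖² · Area(T). -/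
/-!
Write `u = v₂ - v₁`, `w = v₃ - v₁` and let `D = u₀ w₁ - u₁ w₀` be their determinant, which is nonzero
because the triangle is nondegenerate. Two facts reduce the formula to a polynomial identity:

* `toReal_volume_triangle`: the area of the triangle is `|D| / 2`, since the triangle is a translate
  of the image of the standard triangle (of area `1 / 2`) under the linear map with columns `u, w`;
* `cot_angle_eq`: the cotangent of the angle between two vectors is their inner product divided by
  the absolute value of their determinant. At each of the three vertices this determinant is `D`.

After multiplication by `4 |D|` the claim reads
`‖A‖² D² = ⟪u, w⟫ ‖A (u - w)‖² + ⟪w - u, -u⟫ ‖A w‖² + ⟪-w, u - w⟫ ‖A u‖²`,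
an identity between polynomials in the coordinates of `u`, `w` and the entries of `A`.
-/

open scoped BigOperators

namespace CotangentFormula

/-- The determinant of the pair of plane vectors `u`, `w`. -/
def det2 (u w : EuclideanSpace ℝ (Fin 2)) : ℝ := u 0 * w 1 - u 1 * w 0

lemma norm_sq_eq (u : EuclideanSpace ℝ (Fin 2)) : ‖u‖ ^ 2 = u 0 ^ 2 + u 1 ^ 2 := by
  simp [EuclideanSpace.norm_sq_eq, Fin.sum_univ_two]

lemma inner_eq (u w : EuclideanSpace ℝ (Fin 2)) : inner ℝ u w = u 0 * w 0 + u 1 * w 1 := by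
  simp [PiLp.inner_apply, Fin.sum_univ_two, mul_comm]

lemma cot_angle_eq (u w : EuclideanSpace ℝ (Fin 2)) (h : det2 u w ≠ 0) :
    Real.cot (InnerProductGeometry.angle u w) = (u 0 * w 0 + u 1 * w 1) / |det2 u w| := by
  have hs : Real.sin (InnerProductGeometry.angle u w) * (‖u‖ * ‖w‖) = |det2 u w| := by
    rw [InnerProductGeometry.sin_angle_mul_norm_mul_norm, inner_eq, inner_eq, inner_eq,
      ← Real.sqrt_sq_eq_abs]
    congr 1
    unfold det2
    ring
  have hc := InnerProductGeometry.cos_angle_mul_norm_mul_norm u w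
  rw [inner_eq] at hc
  have hn : ‖u‖ * ‖w‖ ≠ 0 := by
    intro h0
    rw [h0, mul_zero] at hs
    exact h (abs_eq_zero.mp hs.symm)
  rw [← hs, ← hc, Real.cot_eq_cos_div_sin, mul_div_mul_right _ _ hn]

/-- With `u = v₂ - v₁` and `w = v₃ - v₁`, a zero determinant would make `(w i) u - (u i) w` vanish
for both coordinates `i`; affine independence then forces `u = 0`, a contradiction. -/
lemma det2_ne_zero (v₁ v₂ v₃ : EuclideanSpace ℝ (Fin 2))
    (hind : AffineIndependent ℝ ![v₁, v₂, v₃]) :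
    det2 (v₂ - v₁) (v₃ - v₁) ≠ 0 := by
  intro hD
  have key : ∀ s t : ℝ, s • (v₂ - v₁) + t • (v₃ - v₁) = 0 → s = 0 ∧ t = 0 := by
    intro s t hst
    have h := (affineIndependent_iff.mp hind) Finset.univ ![-(s + t), s, t]
      (by simp [Fin.sum_univ_three])
      (by
        rw [← hst]
        simp only [Fin.sum_univ_three, Matrix.cons_val]
        module)
    exact ⟨by simpa using h 1 (Finset.mem_univ _), by simpa using h 2 (Finset.mem_univ _)⟩
  generalize v₂ - v₁ = u at *
  generalize v₃ - v₁ = w at *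
  unfold det2 at hD
  have h0 := key (w 0) (-(u 0)) (by
    ext i
    fin_cases i
    · simp; ring
    · simp; linarith)
  have h1 := key (w 1) (-(u 1)) (by
    ext i
    fin_cases i
    · simp; linarith
    · simp; ring)
  have h2 := key 1 0 (by
    ext i
    fin_cases i
    · simpa using h0.2
    · simpa using h1.2)
  exact one_ne_zero h2.1

/-- The standard triangle in `ℝ × ℝ` has area `1 / 2`, by integrating the lengths `1 - x` of its
vertical slices. -/
lemma volume_stdTriangle_prod :
    MeasureTheory.volume {p : ℝ × ℝ | 0 ≤ p.1 ∧ 0 ≤ p.2 ∧ p.1 + p.2 ≤ 1}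
      = ENNReal.ofReal (1 / 2) := by
  have hm : MeasurableSet {p : ℝ × ℝ | 0 ≤ p.1 ∧ 0 ≤ p.2 ∧ p.1 + p.2 ≤ 1} := by
    measurability
  rw [MeasureTheory.Measure.volume_eq_prod, MeasureTheory.Measure.prod_apply hm]
  have hslice : ∀ x : ℝ, MeasureTheory.volume
      (Prod.mk x ⁻¹' {p : ℝ × ℝ | 0 ≤ p.1 ∧ 0 ≤ p.2 ∧ p.1 + p.2 ≤ 1})
      = (Set.Icc (0 : ℝ) 1).indicator (fun x => ENNReal.ofReal (1 - x)) x := by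
    intro x
    by_cases hx : x ∈ Set.Icc (0 : ℝ) 1
    · rw [Set.indicator_of_mem hx]
      have : Prod.mk x ⁻¹' {p : ℝ × ℝ | 0 ≤ p.1 ∧ 0 ≤ p.2 ∧ p.1 + p.2 ≤ 1}
          = Set.Icc 0 (1 - x) := by
        ext y
        simp only [Set.mem_preimage, Set.mem_ofPred_eq, Set.mem_Icc]
        constructor
        · rintro ⟨_, h2, h3⟩
          exact ⟨h2, by linarith⟩
        · rintro ⟨h2, h3⟩
          exact ⟨hx.1, h2, by linarith⟩
      rw [this, Real.volume_Icc, sub_zero]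
    · rw [Set.indicator_of_notMem hx]
      have : Prod.mk x ⁻¹' {p : ℝ × ℝ | 0 ≤ p.1 ∧ 0 ≤ p.2 ∧ p.1 + p.2 ≤ 1} = ∅ := by
        ext y
        simp only [Set.mem_preimage, Set.mem_ofPred_eq, Set.mem_empty_iff_false, iff_false]
        rintro ⟨h1, h2, h3⟩
        exact hx ⟨h1, by linarith⟩
      rw [this, MeasureTheory.measure_empty]
  simp_rw [hslice]
  rw [MeasureTheory.lintegral_indicator measurableSet_Icc,
    ← MeasureTheory.ofReal_integral_eq_lintegral_ofReal]
  · congr 1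
    rw [MeasureTheory.integral_Icc_eq_integral_Ioc,
      ← intervalIntegral.integral_of_le zero_le_one]
    rw [intervalIntegral.integral_sub (by simp) (by simp), integral_id]
    norm_num
  · exact (Continuous.integrableOn_Icc (by fun_prop))
  · filter_upwards [MeasureTheory.ae_restrict_mem measurableSet_Icc] with x hx
    simpa using hx.2

/-- The standard triangle with vertices `0`, `e₀`, `e₁` in the Euclidean plane. -/
def stdTriangle : Set (EuclideanSpace ℝ (Fin 2)) := {x | 0 ≤ x 0 ∧ 0 ≤ x 1 ∧ x 0 + x 1 ≤ 1}

lemma volume_stdTriangle : MeasureTheory.volume stdTriangle = ENNReal.ofReal (1 / 2) := by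
  have hp := (MeasureTheory.volume_preserving_finTwoArrow ℝ).comp
    (EuclideanSpace.volume_preserving_symm_measurableEquiv_toLp (Fin 2))
  rw [← volume_stdTriangle_prod, ← hp.measure_preimage_equiv
    (f := (MeasurableEquiv.toLp 2 (Fin 2 → ℝ)).symm.trans MeasurableEquiv.finTwoArrow)]
  rfl

/-- The linear endomorphism of the plane with columns `u`, `w`. -/
noncomputable def colMap (u w : EuclideanSpace ℝ (Fin 2)) :
    EuclideanSpace ℝ (Fin 2) →ₗ[ℝ] EuclideanSpace ℝ (Fin 2) :=
  Matrix.toLpLin 2 2 !![u 0, w 0; u 1, w 1]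

lemma colMap_apply (u w x : EuclideanSpace ℝ (Fin 2)) : colMap u w x = x 0 • u + x 1 • w := by
  ext i
  fin_cases i <;>
    simp [colMap, Matrix.toLpLin_apply, dotProduct, Fin.sum_univ_two] <;> ring

lemma det_colMap (u w : EuclideanSpace ℝ (Fin 2)) : LinearMap.det (colMap u w) = det2 u w := by
  rw [colMap, Matrix.toLpLin_eq_toLin, LinearMap.det_toLin, Matrix.det_fin_two_of, det2]
  ring

lemma triangle_eq_image (v₁ v₂ v₃ : EuclideanSpace ℝ (Fin 2)) :
    convexHull ℝ {v₁, v₂, v₃}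
      = (fun x => v₁ + x) '' (colMap (v₂ - v₁) (v₃ - v₁) '' stdTriangle) := by
  have hconv : Convex ℝ stdTriangle := by
    rintro x ⟨hx0, hx1, hx⟩ y ⟨hy0, hy1, hy⟩ a b ha hb hab
    refine ⟨?_, ?_, ?_⟩ <;> simp only [PiLp.add_apply, PiLp.smul_apply, smul_eq_mul]
    · positivity
    · positivity
    · nlinarith [mul_le_mul_of_nonneg_left hx ha, mul_le_mul_of_nonneg_left hy hb]
  apply Set.Subset.antisymm
  · refine convexHull_min ?_ ((hconv.linear_image _).translate _)
    have hmem : ∀ a b : ℝ, 0 ≤ a → 0 ≤ b → a + b ≤ 1 →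
        v₁ + (a • (v₂ - v₁) + b • (v₃ - v₁))
          ∈ (fun x => v₁ + x) '' (colMap (v₂ - v₁) (v₃ - v₁) '' stdTriangle) := by
      intro a b ha hb hab
      exact ⟨_, ⟨!₂[a, b], ⟨by simpa using ha, by simpa using hb, by simpa using hab⟩,
        colMap_apply _ _ _⟩, by simp⟩
    rintro p (rfl | rfl | rfl)
    · simpa using hmem 0 0 le_rfl le_rfl (by norm_num)
    · simpa using hmem 1 0 zero_le_one le_rfl (by norm_num)
    · simpa using hmem 0 1 le_rfl zero_le_one (by norm_num)
  · rintro _ ⟨_, ⟨x, ⟨hx0, hx1, hx⟩, rfl⟩, rfl⟩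
    have h := (convex_convexHull ℝ {v₁, v₂, v₃}).sum_mem (t := Finset.univ)
      (w := ![1 - x 0 - x 1, x 0, x 1]) (z := ![v₁, v₂, v₃])
      (by
        intro i _
        fin_cases i
        · change 0 ≤ 1 - x 0 - x 1
          linarith
        · exact hx0
        · exact hx1)
      (by
        simp only [Fin.sum_univ_three, Matrix.cons_val]
        ring)
      (by
        intro i _
        apply subset_convexHull
        fin_cases i <;> simp)
    convert h using 1
    simp only [colMap_apply, Fin.sum_univ_three, Matrix.cons_val]
    module

lemma toReal_volume_triangle (v₁ v₂ v₃ : EuclideanSpace ℝ (Fin 2)) :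
    (MeasureTheory.volume (convexHull ℝ {v₁, v₂, v₃})).toReal
      = |det2 (v₂ - v₁) (v₃ - v₁)| / 2 := by
  rw [triangle_eq_image, Set.image_add_left, MeasureTheory.measure_preimage_add,
    MeasureTheory.Measure.addHaar_image_linearMap, det_colMap, volume_stdTriangle,
    ENNReal.toReal_mul, ENNReal.toReal_ofReal (abs_nonneg _), ENNReal.toReal_ofReal (by norm_num)]
  ring

lemma map_apply_coord (A : EuclideanSpace ℝ (Fin 2) →L[ℝ] EuclideanSpace ℝ (Fin 2))
    (u : EuclideanSpace ℝ (Fin 2)) (i : Fin 2) :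
    A u i = u 0 * A (EuclideanSpace.single 0 1) i + u 1 * A (EuclideanSpace.single 1 1) i := by
  have hu : u = u 0 • EuclideanSpace.single 0 (1 : ℝ) + u 1 • EuclideanSpace.single 1 (1 : ℝ) := by
    ext j
    fin_cases j <;> simp
  conv_lhs => rw [hu]
  simp

end CotangentFormula

open CotangentFormula in
/-- **Cotangent formula for the Dirichlet energy of an affine map on a
triangle.** Let `T` be the nondegenerate triangle with vertices `v₁, v₂, v₃` in
`ℝ²`, with interior angles `α₁, α₂, α₃`, and let `φ x = A x + c` be an affine
map with (constant) derivative `A`. Then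
`½ ∫_T ‖Dφ‖² = ½ ‖A‖_F² · Area(T)` equals
`¼ (cot α₁ ‖φ v₂ − φ v₃‖² + cot α₂ ‖φ v₃ − φ v₁‖² + cot α₃ ‖φ v₁ − φ v₂‖²)`,
where `‖A‖_F²` is the squared Frobenius norm of `A`. -/
theorem dirichlet_energy_cotangent_formula
    (v₁ v₂ v₃ : EuclideanSpace ℝ (Fin 2))
    (hind : AffineIndependent ℝ ![v₁, v₂, v₃])
    (A : EuclideanSpace ℝ (Fin 2) →L[ℝ] EuclideanSpace ℝ (Fin 2))
    (c : EuclideanSpace ℝ (Fin 2))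
    (φ : EuclideanSpace ℝ (Fin 2) → EuclideanSpace ℝ (Fin 2))
    (hφ : ∀ x, φ x = A x + c)
    (T : Set (EuclideanSpace ℝ (Fin 2)))
    (hT : T = convexHull ℝ {v₁, v₂, v₃})
    (frobSq : ℝ)
    (hfrob : frobSq = ∑ j : Fin 2, ∑ i : Fin 2, (A (EuclideanSpace.single j 1) i) ^ 2)
    (α₁ α₂ α₃ : ℝ)
    (hα₁ : α₁ = InnerProductGeometry.angle (v₂ - v₁) (v₃ - v₁))
    (hα₂ : α₂ = InnerProductGeometry.angle (v₃ - v₂) (v₁ - v₂))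
    (hα₃ : α₃ = InnerProductGeometry.angle (v₁ - v₃) (v₂ - v₃)) :
    (1 / 2 : ℝ) * frobSq * (MeasureTheory.volume T).toReal
      = (1 / 4 : ℝ) * (Real.cot α₁ * ‖φ v₂ - φ v₃‖ ^ 2
        + Real.cot α₂ * ‖φ v₃ - φ v₁‖ ^ 2
        + Real.cot α₃ * ‖φ v₁ - φ v₂‖ ^ 2) := by
  have hD := det2_ne_zero v₁ v₂ v₃ hind
  have e₂ : det2 (v₃ - v₂) (v₁ - v₂) = det2 (v₂ - v₁) (v₃ - v₁) := by
    simp only [det2, PiLp.sub_apply]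
    ring
  have e₃ : det2 (v₁ - v₃) (v₂ - v₃) = det2 (v₂ - v₁) (v₃ - v₁) := by
    simp only [det2, PiLp.sub_apply]
    ring
  have hφs : ∀ x y, φ x - φ y = A (x - y) := by
    intro x y
    rw [hφ, hφ, map_sub]
    abel
  rw [hT, toReal_volume_triangle, hα₁, hα₂, hα₃, cot_angle_eq _ _ hD,
    cot_angle_eq _ _ (e₂ ▸ hD), cot_angle_eq _ _ (e₃ ▸ hD), e₂, e₃, hφs, hφs, hφs, hfrob,
    norm_sq_eq, norm_sq_eq, norm_sq_eq]
  have hD' : |det2 (v₂ - v₁) (v₃ - v₁)| ≠ 0 := abs_ne_zero.mpr hD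
  field_simp
  rw [sq_abs]
  simp only [map_apply_coord A (_ - _), Fin.sum_univ_two, det2, PiLp.sub_apply]
  ring
end
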